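/- arXiv:1702.07173 — 2 statements merged into one kernel-verified Lean document; each statement's English description precedes it below -/
import Mathlib

section
/- Let ι be a countable index type and (π_i)_{i∈ι} a family of nonnegative reals with Σ_{i∈ι} π_i < ∞. Then the order interval {p ∈ ℓ¹(ι) : 0 ≤ p_i ≤ π_i for all i ∈ ι} is a compact subset of ℓ¹(ι) (with its norm topology). -/
/-!
The box `∏ i, [0, π i]` is compact in the product topology by Tychonoff's theorem, and the order
interval is its image in `ℓ¹(ι)`. The map from the box to `ℓ¹(ι)` is continuous: for fixed `x`,
the distance `∑' i, |y i - x i|` is a series of continuous functions of `y` dominated termwise by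
the summable family `π`, so by the Weierstrass M-test it is continuous in `y`, and it vanishes at
`y = x`.
-/

theorem order_box_memlp_one {ι : Type*} {π : ι → ℝ} (hπ : Summable π)
    {x : ι → ℝ} (hx : ∀ i, 0 ≤ x i ∧ x i ≤ π i) : Memℓp x 1 := by
  refine memℓp_gen ?_
  simp only [ENNReal.toReal_one, Real.rpow_one]
  refine Summable.of_nonneg_of_le (fun i => norm_nonneg _) (fun i => ?_) hπ
  rw [Real.norm_of_nonneg (hx i).1]
  exact (hx i).2

/-- The order interval `{p ∈ ℓ¹(ι) : 0 ≤ p ≤ π}` below a summable nonnegative family `π`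
is compact in the norm topology of `ℓ¹(ι)`. -/
theorem order_interval_isCompact_in_l1 (ι : Type*) [Countable ι]
    (π : ι → ℝ) (hπ0 : ∀ i, 0 ≤ π i) (hπ : Summable π) :
    IsCompact {p : lp (fun _ : ι => ℝ) 1 |
      ∀ i : ι, 0 ≤ (p : ∀ _ : ι, ℝ) i ∧ (p : ∀ _ : ι, ℝ) i ≤ π i} := by
  let K : Set (ι → ℝ) := Set.univ.pi fun i => Set.Icc 0 (π i)
  have hK : IsCompact K := isCompact_univ_pi fun i => isCompact_Icc
  have hmem : ∀ x : K, ∀ i, 0 ≤ x.1 i ∧ x.1 i ≤ π i := fun x i => x.2 i (Set.mem_univ i)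
  let F : K → lp (fun _ : ι => ℝ) 1 := fun x => ⟨x.1, order_box_memlp_one hπ (hmem x)⟩
  have hdist : ∀ x y : K, dist (F y) (F x) = ∑' i, |y.1 i - x.1 i| := by
    intro x y
    rw [dist_eq_norm, lp.norm_eq_tsum_rpow (by simp)]
    simp only [ENNReal.toReal_one, Real.rpow_one, div_one]
    rfl
  have hF : Continuous F := by
    rw [continuous_iff_continuousAt]
    intro x
    have hc : Continuous fun y : K => ∑' i, |y.1 i - x.1 i| := by
      refine continuous_tsum (fun i =>
        (((continuous_apply i).comp continuous_subtype_val).sub continuous_const).abs) hπ fun i y => ?_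
      have hy := hmem y i
      have hx := hmem x i
      rw [Real.norm_eq_abs, abs_abs, abs_le]
      constructor <;> linarith
    rw [ContinuousAt, tendsto_iff_dist_tendsto_zero]
    simp only [hdist]
    simpa using hc.tendsto x
  have hrange : {p : lp (fun _ : ι => ℝ) 1 |
      ∀ i : ι, 0 ≤ (p : ∀ _ : ι, ℝ) i ∧ (p : ∀ _ : ι, ℝ) i ≤ π i} = Set.range F := by
    ext p
    constructor
    · intro hp
      exact ⟨⟨fun i => p i, fun i _ => hp i⟩, rfl⟩
    · rintro ⟨x, rfl⟩
      exact hmem x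
  have : CompactSpace K := isCompact_iff_compactSpace.mp hK
  rw [hrange]
  exact isCompact_range hF
end

section
/- Let t₀ > 0 and let φ : [0,∞) → ℝ be strictly concave and strictly increasing on [0,t₀], and strictly convex and strictly decreasing on [t₀,∞). Then for all reals s, t, r with 0 ≤ s < t < t₀ and r > s, one has φ(r) + φ(t) > φ(s) + φ(r + t − s). -/
/-!
Put `d = t - s > 0`; the claim is that the increment `φ (r + d) - φ r` is smaller than
`φ (s + d) - φ s`. Increments of fixed length of a strictly concave function strictly decrease
(`StrictConcaveOn.add_lt_add_of_shift`), which settles the case `r + d ≤ t₀`. If `t₀ ≤ r`, the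
left increment is negative and the right one positive. If `r < t₀ < r + d`, the part of the left
increment beyond `t₀` is negative, so it suffices to compare the increments of length `t₀ - r < d`
and to use that `φ` increases on `[0, t₀]`.
-/

/-- Increments of fixed length `d` of a strictly concave function strictly decrease. -/
theorem StrictConcaveOn.add_lt_add_of_shift {S : Set ℝ} {φ : ℝ → ℝ}
    (h : StrictConcaveOn ℝ S φ) {a b d : ℝ} (ha : a ∈ S) (hb : b + d ∈ S)
    (hab : a < b) (hd : 0 < d) : φ a + φ (b + d) < φ b + φ (a + d) := by
  have hL : 0 < b + d - a := by linarith
  have hne : a ≠ b + d := by linarith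
  -- `b` and `a + d` are the convex combinations of `a` and `b + d` with swapped weights `p`, `q`.
  obtain ⟨p, hp⟩ : ∃ p, p = d / (b + d - a) := ⟨_, rfl⟩
  obtain ⟨q, hq⟩ : ∃ q, q = (b - a) / (b + d - a) := ⟨_, rfl⟩
  have hp0 : 0 < p := hp ▸ div_pos hd hL
  have hq0 : 0 < q := hq ▸ div_pos (by linarith) hL
  have hpq : p + q = 1 := by
    rw [hp, hq]; field_simp; ring
  have hpL : p * (b + d - a) = d := by
    rw [hp]; field_simp
  have h1 := h.2 ha hb hne hp0 hq0 hpq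
  have h2 := h.2 ha hb hne hq0 hp0 (by linarith)
  obtain rfl : q = 1 - p := by linarith
  simp only [smul_eq_mul] at h1 h2
  have e1 : p * a + (1 - p) * (b + d) = b := by linarith
  have e2 : (1 - p) * a + p * (b + d) = a + d := by linarith
  rw [e1] at h1
  rw [e2] at h2
  linarith

/-- The key path-swapping inequality for cave payoffs: if `φ` is strictly concave and
strictly increasing on `[0,t₀]` and strictly convex and strictly decreasing on `[t₀,∞)`,
then for `0 ≤ s < t < t₀` and `r > s` one has `φ(r) + φ(t) > φ(s) + φ(r+t−s)`. -/
theorem cave_path_swap_inequality (t₀ : ℝ) (ht₀ : 0 < t₀) (φ : ℝ → ℝ)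
    (hconc : StrictConcaveOn ℝ (Set.Icc 0 t₀) φ)
    (hmono : StrictMonoOn φ (Set.Icc 0 t₀))
    (hconv : StrictConvexOn ℝ (Set.Ici t₀) φ)
    (hanti : StrictAntiOn φ (Set.Ici t₀)) :
    ∀ s t r : ℝ, 0 ≤ s → s < t → t < t₀ → s < r →
      φ s + φ (r + t - s) < φ r + φ t := by
  intro s t r hs hst ht hsr
  rcases le_or_gt t₀ r with hr | hr
  · have h1 : φ (r + t - s) < φ r :=
      hanti (Set.mem_Ici.2 hr) (Set.mem_Ici.2 (by linarith)) (by linarith)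
    have h2 : φ s < φ t := hmono ⟨hs, by linarith⟩ ⟨by linarith, ht.le⟩ hst
    linarith
  · rcases le_or_gt (r + t - s) t₀ with hrt | hrt
    · have h := hconc.add_lt_add_of_shift (a := s) (b := r) (d := t - s)
        ⟨hs, by linarith⟩ ⟨by linarith, by linarith⟩ hsr (by linarith)
      rwa [← add_sub_assoc, add_sub_cancel] at h
    · have h1 : φ (r + t - s) < φ t₀ :=
        hanti Set.self_mem_Ici (Set.mem_Ici.2 hrt.le) hrt
      have h2 := hconc.add_lt_add_of_shift (a := s) (b := r) (d := t₀ - r)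
        ⟨hs, by linarith⟩ ⟨by linarith, by linarith⟩ hsr (by linarith)
      rw [add_sub_cancel] at h2
      have h3 : φ (s + (t₀ - r)) < φ t :=
        hmono ⟨by linarith, by linarith⟩ ⟨by linarith, ht.le⟩ (by linarith)
      linarith
end
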